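/- Let C ⊆ 𝔽₂^n be a binary linear code, X uniform on C, Y^ε the output of BEC(ε), and i ≠ j two coordinates. For every δ ∈ (0,1/2) and ε ∈ (0,1) there exists a constant c(δ,ε) > 0, bounded away from 0 when δ and ε are bounded away from 0 (and ε away from 1), such that: if I(X_i ; Y^ε_{∼i}) ∈ (δ, 1−δ), then I(X_i ; X_j | Y^ε_{∼i,j}) ≥ (c(δ,ε)/√n)·α^ε_{ij}. -/

import Mathlib

open scoped Classical
open Finset

noncomputable section

/-- Vectors in 𝔽₂^n (codewords and binary patterns). -/
abbrev Pattern (n : ℕ) := Fin n → ZMod 2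

/-- Hamming weight. -/
def wH {n : ℕ} (x : Pattern n) : ℕ := hammingNorm x

/-- `z` covers `x` if the support of `x` is contained in the support of `z`. -/
def covers {n : ℕ} (z x : Pattern n) : Prop := ∀ k, x k ≠ 0 → z k ≠ 0

/-- Sample space: a codeword of C together with an erasure pattern (1 = erased). -/
abbrev Samp (n : ℕ) (C : Submodule (ZMod 2) (Pattern n)) := C × Pattern n

/-- Joint probability mass: X uniform on C, coordinates erased i.i.d. with prob. ε. -/
def pmfP {n : ℕ} (C : Submodule (ZMod 2) (Pattern n)) (ε : ℝ) (ω : Samp n C) : ℝ :=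
  (Nat.card C : ℝ)⁻¹ * ε ^ wH ω.2 * (1 - ε) ^ (n - wH ω.2)

/-- The BEC output Y: erased coordinates become `none`. -/
def Yout {n : ℕ} {C : Submodule (ZMod 2) (Pattern n)} (ω : Samp n C) :
    Fin n → Option (ZMod 2) :=
  fun k => if ω.2 k = 1 then none else some (ω.1.1 k)

/-- Y with coordinate i removed. -/
def Ynot {n : ℕ} {C : Submodule (ZMod 2) (Pattern n)} (i : Fin n) (ω : Samp n C) :
    {k : Fin n // k ≠ i} → Option (ZMod 2) :=
  fun k => Yout ω k.1

/-- Y with coordinates i and j removed. -/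
def Ynot2 {n : ℕ} {C : Submodule (ZMod 2) (Pattern n)} (i j : Fin n) (ω : Samp n C) :
    {k : Fin n // k ≠ i ∧ k ≠ j} → Option (ZMod 2) :=
  fun k => Yout ω k.1

/-- Probability of an event under a mass function p. -/
def prE {Ω : Type*} [Fintype Ω] (p : Ω → ℝ) (E : Set Ω) : ℝ :=
  ∑ ω ∈ univ.filter (· ∈ E), p ω

/-- Shannon entropy (in bits) of the random variable f under p. -/
def entr {Ω A : Type*} [Fintype Ω] [Fintype A] (p : Ω → ℝ) (f : Ω → A) : ℝ :=
  -∑ a : A, prE p {ω | f ω = a} * Real.logb 2 (prE p {ω | f ω = a})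

/-- Conditional Shannon entropy H(f | g) in bits. -/
def condEnt {Ω A B : Type*} [Fintype Ω] [Fintype A] [Fintype B]
    (p : Ω → ℝ) (f : Ω → A) (g : Ω → B) : ℝ :=
  -∑ a : A, ∑ b : B,
    prE p {ω | f ω = a ∧ g ω = b} *
      Real.logb 2 (prE p {ω | f ω = a ∧ g ω = b} / prE p {ω | g ω = b})

/-- Mutual information I(f ; g) in bits. -/
def mutInf {Ω A B : Type*} [Fintype Ω] [Fintype A] [Fintype B]
    (p : Ω → ℝ) (f : Ω → A) (g : Ω → B) : ℝ :=
  entr p f - condEnt p f g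

/-- Conditional mutual information I(f ; g | h) in bits. -/
def condMI {Ω A B D : Type*} [Fintype Ω] [Fintype A] [Fintype B] [Fintype D]
    (p : Ω → ℝ) (f : Ω → A) (g : Ω → B) (h : Ω → D) : ℝ :=
  condEnt p f h - condEnt p f (fun ω => (g ω, h ω))

/-- Pr(Z^ε ∈ B) for the random pattern Z^ε = Z^ε(ij) with Z^ε_i = Z^ε_j = 1 and the
remaining coordinates i.i.d. Bernoulli(ε). -/
def probZ {n : ℕ} (ε : ℝ) (i j : Fin n) (B : Set (Pattern n)) : ℝ :=
  ∑ z ∈ univ.filter (fun z : Pattern n => z ∈ B ∧ z i = 1 ∧ z j = 1),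
    ε ^ (univ.filter (fun k => k ≠ i ∧ k ≠ j ∧ z k = 1)).card *
      (1 - ε) ^ (univ.filter (fun k => k ≠ i ∧ k ≠ j ∧ z k = 0)).card

/-- C^{ij}_{ab}(z): codewords c ∈ C with (c_i, c_j) = (a, b) covered by z. -/
def Cab {n : ℕ} (C : Submodule (ZMod 2) (Pattern n)) (i j : Fin n) (a b : ZMod 2)
    (z : Pattern n) : Set (Pattern n) :=
  {c | c ∈ C ∧ c i = a ∧ c j = b ∧ covers z c}

def B1 {n : ℕ} (C : Submodule (ZMod 2) (Pattern n)) (i j : Fin n) : Set (Pattern n) :=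
  {z | Cab C i j 0 1 z = ∅ ∧ Cab C i j 1 0 z = ∅ ∧ Cab C i j 1 1 z = ∅}

def B2 {n : ℕ} (C : Submodule (ZMod 2) (Pattern n)) (i j : Fin n) : Set (Pattern n) :=
  {z | Cab C i j 0 1 z ≠ ∅ ∧ Cab C i j 1 0 z = ∅ ∧ Cab C i j 1 1 z = ∅}

def B3 {n : ℕ} (C : Submodule (ZMod 2) (Pattern n)) (i j : Fin n) : Set (Pattern n) :=
  {z | Cab C i j 1 0 z ≠ ∅ ∧ Cab C i j 0 1 z = ∅ ∧ Cab C i j 1 1 z = ∅}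

def B4 {n : ℕ} (C : Submodule (ZMod 2) (Pattern n)) (i j : Fin n) : Set (Pattern n) :=
  {z | Cab C i j 1 1 z ≠ ∅ ∧ Cab C i j 0 1 z = ∅ ∧ Cab C i j 1 0 z = ∅}

def B5 {n : ℕ} (C : Submodule (ZMod 2) (Pattern n)) (i j : Fin n) : Set (Pattern n) :=
  {z | Cab C i j 0 1 z ≠ ∅ ∧ Cab C i j 1 0 z ≠ ∅ ∧ Cab C i j 1 1 z ≠ ∅}

/-- α^ε_{ij} = Pr(Z^ε ∈ B₄ | Z^ε ∈ B₂ ∪ B₃ ∪ B₄). -/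
def alphaIJ {n : ℕ} (C : Submodule (ZMod 2) (Pattern n)) (ε : ℝ) (i j : Fin n) : ℝ :=
  probZ ε i j (B4 C i j) / probZ ε i j (B2 C i j ∪ B3 C i j ∪ B4 C i j)

/-!
If some codeword vanishes at the received coordinates but not at `i`, translation by it shows that
`X_i` is a fair bit given the channel output; otherwise `X_i` is determined. Hence each conditional
entropy of `X_i` is the probability of an ambiguous erasure pattern, and the conditional mutual
information is exactly `Pr(Z ∈ B₄)`. It remains to bound `Pr(Z ∈ B₂ ∪ B₃ ∪ B₄)` from below.

The event `B₁ᶜ` is increasing, and none of its points in `B₅` has a pivotal coordinate `k`: of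
codewords `c`, `c'`, `c + c'` of types `01`, `10`, `11`, one vanishes at `k`. The boundary of `B₁ᶜ`
therefore lies in `B₂ ∪ B₃ ∪ B₄`, and its mass is at least a constant over `√n` by the isoperimetric
inequality `μ(A)(1 - μ(A)) / 2 ≤ E √(number of pivotal coordinates)`, which tensorizes because the
Euclidean norm is convex.
-/

section FiniteProbability

variable {Ω : Type*} [Fintype Ω] {p : Ω → ℝ}

lemma prE_eq_sum_indicator (p : Ω → ℝ) (E : Set Ω) : prE p E = ∑ ω, E.indicator p ω := by
  simp only [prE, Finset.sum_filter, Set.indicator_apply]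

lemma prE_nonneg (hp : 0 ≤ p) (E : Set Ω) : 0 ≤ prE p E :=
  Finset.sum_nonneg fun ω _ => hp ω

lemma prE_mono (hp : 0 ≤ p) {E F : Set Ω} (h : E ⊆ F) : prE p E ≤ prE p F :=
  Finset.sum_le_sum_of_subset_of_nonneg (Finset.monotone_filter_right _ fun _ _ hω => h hω)
    fun ω _ _ => hp ω

lemma prE_univ (p : Ω → ℝ) : prE p Set.univ = ∑ ω, p ω := by
  simp [prE]

lemma prE_sdiff (p : Ω → ℝ) {E F : Set Ω} (h : F ⊆ E) : prE p (E \ F) = prE p E - prE p F := by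
  simp only [prE_eq_sum_indicator, Set.indicator_sdiff h, Pi.sub_apply, Finset.sum_sub_distrib]

lemma prE_union_le (hp : 0 ≤ p) (E F : Set Ω) : prE p (E ∪ F) ≤ prE p E + prE p F := by
  rw [← sub_le_iff_le_add', ← prE_sdiff p Set.subset_union_left, Set.union_sdiff_left]
  exact prE_mono hp Set.sdiff_subset

lemma prE_preimage_equiv (σ : Equiv.Perm Ω) (hσ : ∀ ω, p (σ ω) = p ω) (E : Set Ω) :
    prE p (σ ⁻¹' E) = prE p E := by
  simp only [prE_eq_sum_indicator]
  exact Fintype.sum_equiv σ _ _ fun ω => by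
    simp only [Set.indicator_apply, Set.mem_preimage, hσ]

lemma sum_prE_fiber_mul {B : Type*} [Fintype B] (p : Ω → ℝ) (g : Ω → B) (F : B → ℝ) :
    ∑ b, prE p {ω | g ω = b} * F b = ∑ ω, p ω * F (g ω) := by
  rw [← Finset.sum_fiberwise univ g]
  refine Finset.sum_congr rfl fun b _ => ?_
  simp only [prE, Set.mem_ofPred_eq, Finset.sum_mul]
  exact Finset.sum_congr rfl fun ω hω => by rw [(Finset.mem_filter.1 hω).2]

end FiniteProbability

section Isoperimetry

variable {n : ℕ} {ε : ℝ}

/-- The Bernoulli(`ε`) mass function on a single coordinate. -/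
def bitWeight (ε : ℝ) (a : ZMod 2) : ℝ := if a = 1 then ε else 1 - ε

/-- The mass function on patterns whose coordinates are i.i.d. Bernoulli(`ε`). -/
def bernWeight (ε : ℝ) (x : Pattern n) : ℝ := ∏ k, bitWeight ε (x k)

lemma zmod_two_ne_zero_iff {a : ZMod 2} : a ≠ 0 ↔ a = 1 := by
  decide +revert

lemma zmod_two_sum (f : ZMod 2 → ℝ) : ∑ a, f a = f 0 + f 1 :=
  Fin.sum_univ_two f

lemma sum_bitWeight (ε : ℝ) : ∑ a, bitWeight ε a = 1 := by
  simp [zmod_two_sum, bitWeight]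

lemma bernWeight_nonneg (hε : ε ∈ Set.Icc 0 1) : 0 ≤ (bernWeight ε : Pattern n → ℝ) := by
  intro x
  refine Finset.prod_nonneg fun k _ => ?_
  unfold bitWeight
  split_ifs
  exacts [hε.1, sub_nonneg.2 hε.2]

lemma prE_bernWeight_cylinder (ε : ℝ) (S : Finset (Fin n)) (z : Pattern n) :
    prE (bernWeight ε) {e | ∀ l ∈ S, e l = z l} = ∏ l ∈ S, bitWeight ε (z l) := by
  have sum_factor (l : Fin n) : ∑ a ∈ (if l ∈ S then {z l} else univ), bitWeight ε a =
      if l ∈ S then bitWeight ε (z l) else 1 := by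
    split_ifs
    exacts [Finset.sum_singleton _ _, sum_bitWeight ε]
  calc prE (bernWeight ε) {e | ∀ l ∈ S, e l = z l}
      = ∑ e ∈ Fintype.piFinset fun l => if l ∈ S then {z l} else univ,
          ∏ l, bitWeight ε (e l) := by
        refine Finset.sum_congr (Finset.ext fun e => ?_) fun _ _ => rfl
        simp only [Finset.mem_filter, Finset.mem_univ, true_and, Set.mem_ofPred_eq,
          Fintype.mem_piFinset]
        refine forall_congr' fun l => ?_
        split_ifs with hl <;> simp [hl]
    _ = ∏ l ∈ S, bitWeight ε (z l) := by
        rw [← Finset.prod_univ_sum]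
        simp only [sum_factor, Finset.prod_ite_mem, Finset.univ_inter]

lemma sum_bernWeight (ε : ℝ) : ∑ x : Pattern n, bernWeight ε x = 1 := by
  simpa [prE_univ] using prE_bernWeight_cylinder (n := n) ε ∅ 0

lemma prE_bernWeight_le_one (hε : ε ∈ Set.Icc 0 1) (A : Set (Pattern n)) :
    prE (bernWeight ε) A ≤ 1 := by
  rw [← sum_bernWeight (n := n) ε, ← prE_univ]
  exact prE_mono (bernWeight_nonneg hε) (Set.subset_univ A)

lemma sum_bernWeight_mul_succ (ε : ℝ) (F : Pattern (n + 1) → ℝ) :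
    ∑ x, bernWeight ε x * F x =
      (1 - ε) * ∑ y : Pattern n, bernWeight ε y * F (Fin.cons 0 y) +
        ε * ∑ y : Pattern n, bernWeight ε y * F (Fin.cons 1 y) := by
  have cons_weight (a : ZMod 2) (y : Pattern n) :
      bernWeight ε (Fin.cons a y : Pattern (n + 1)) = bitWeight ε a * bernWeight ε y := by
    simp [bernWeight, Fin.prod_univ_succ]
  rw [← (Fin.consEquiv fun _ => ZMod 2).sum_comp, Fintype.sum_prod_type, zmod_two_sum]
  simp [Fin.consEquiv, cons_weight, mul_assoc, ← Finset.mul_sum, bitWeight]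

/-- A family of supports closed under enlargement. -/
def IsIncreasing (A : Set (Pattern n)) : Prop := ∀ ⦃x z⦄, covers z x → x ∈ A → z ∈ A

/-- The coordinates whose deletion from the support takes the point `x` of `A` out of `A`; there are
none when `x ∉ A`. -/
def pivotal (A : Set (Pattern n)) (x : Pattern n) : Finset (Fin n) :=
  univ.filter fun k => x ∈ A ∧ Function.update x k 0 ∉ A

/-- The slice of `A` where the first coordinate is `a`, the step of inductions on dimension. -/
def consSection (A : Set (Pattern (n + 1))) (a : ZMod 2) : Set (Pattern n) :=
  {y | (Fin.cons a y : Pattern (n + 1)) ∈ A}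

lemma covers_cons {a b : ZMod 2} {x z : Pattern n} (hab : a ≠ 0 → b ≠ 0) (h : covers z x) :
    covers (Fin.cons b z : Pattern (n + 1)) (Fin.cons a x) :=
  Fin.cases hab h

lemma isIncreasing_consSection {A : Set (Pattern (n + 1))} (hA : IsIncreasing A) (a : ZMod 2) :
    IsIncreasing (consSection A a) :=
  fun _ _ h => hA (covers_cons id h)

lemma consSection_zero_subset_one {A : Set (Pattern (n + 1))} (hA : IsIncreasing A) :
    consSection A 0 ⊆ consSection A 1 :=
  fun _ hx => hA (covers_cons (absurd rfl) fun _ => id) hx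

lemma prE_bernWeight_succ (ε : ℝ) (A : Set (Pattern (n + 1))) :
    prE (bernWeight ε) A = (1 - ε) * prE (bernWeight ε) (consSection A 0) +
      ε * prE (bernWeight ε) (consSection A 1) := by
  have := sum_bernWeight_mul_succ ε (A.indicator 1)
  simpa [prE_eq_sum_indicator, Set.indicator_apply, consSection] using this

lemma card_pivotal_cons_zero (A : Set (Pattern (n + 1))) (y : Pattern n) :
    #(pivotal A (Fin.cons 0 y)) = #(pivotal (consSection A 0) y) := by
  simp [pivotal, consSection, Fin.card_filter_univ_succ, Fin.cons_update]

lemma card_pivotal_cons_one (A : Set (Pattern (n + 1))) (y : Pattern n) :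
    (#(pivotal A (Fin.cons 1 y)) : ℝ) = #(pivotal (consSection A 1) y) +
      (consSection A 1 \ consSection A 0).indicator 1 y := by
  simp only [pivotal, Fin.card_filter_univ_succ, Fin.update_cons_zero, ← Fin.cons_update,
    Set.indicator_apply, consSection, Set.mem_sdiff, Set.mem_ofPred_eq, Pi.one_apply]
  split_ifs <;> simp

lemma sq_sum_add_sq_sum_le {ι : Type*} (s : Finset ι) {w : ι → ℝ} (hw : ∀ x ∈ s, 0 ≤ w x)
    (f g : ι → ℝ) :
    (∑ x ∈ s, w x * f x) ^ 2 + (∑ x ∈ s, w x * g x) ^ 2 ≤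
      (∑ x ∈ s, w x * √(f x ^ 2 + g x ^ 2)) ^ 2 := by
  have triangle := norm_sum_le s fun x => (w x : ℂ) * ⟨f x, g x⟩
  have norm_term (x) (hx : x ∈ s) : ‖(w x : ℂ) * ⟨f x, g x⟩‖ = w x * √(f x ^ 2 + g x ^ 2) := by
    rw [norm_mul, Complex.norm_of_nonneg (hw x hx), Complex.norm_eq_sqrt_sq_add_sq]
  rw [Finset.sum_congr rfl norm_term, Complex.norm_eq_sqrt_sq_add_sq, Complex.re_sum,
    Complex.im_sum] at triangle
  simpa using (Real.sqrt_le_left (Finset.sum_nonneg fun x hx =>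
    mul_nonneg (hw x hx) (Real.sqrt_nonneg _))).1 triangle

/-- The expected square root of the number of pivotal coordinates under i.i.d. Bernoulli(`ε`)
bits. -/
def meanSqrtPivotal (ε : ℝ) (A : Set (Pattern n)) : ℝ :=
  ∑ x, bernWeight ε x * √(#(pivotal A x))

lemma meanSqrtPivotal_nonneg (hε : ε ∈ Set.Icc 0 1) (A : Set (Pattern n)) :
    0 ≤ meanSqrtPivotal ε A :=
  Finset.sum_nonneg fun x _ => mul_nonneg (bernWeight_nonneg hε x) (Real.sqrt_nonneg _)

lemma meanSqrtPivotal_succ (ε : ℝ) (A : Set (Pattern (n + 1))) :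
    meanSqrtPivotal ε A = (1 - ε) * meanSqrtPivotal ε (consSection A 0) +
      ε * ∑ y : Pattern n, bernWeight ε y * √(#(pivotal A (Fin.cons 1 y))) := by
  simp only [meanSqrtPivotal, sum_bernWeight_mul_succ, card_pivotal_cons_zero]

lemma sq_meanSqrtPivotal_add_sq_le {A : Set (Pattern (n + 1))} (hA : IsIncreasing A)
    (hε : ε ∈ Set.Icc 0 1) :
    meanSqrtPivotal ε (consSection A 1) ^ 2 +
        (prE (bernWeight ε) (consSection A 1) - prE (bernWeight ε) (consSection A 0)) ^ 2 ≤
      (∑ y : Pattern n, bernWeight ε y * √(#(pivotal A (Fin.cons 1 y)))) ^ 2 := by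
  set D := consSection A 1 \ consSection A 0
  have sum_indicator : ∑ y, bernWeight ε y * D.indicator 1 y =
      prE (bernWeight ε) (consSection A 1) - prE (bernWeight ε) (consSection A 0) := by
    rw [← prE_sdiff _ (consSection_zero_subset_one hA), prE_eq_sum_indicator]
    simp [Set.indicator_apply, D]
  have sq_sqrt_add_sq (y : Pattern n) : √(#(pivotal (consSection A 1) y)) ^ 2 +
      D.indicator (1 : Pattern n → ℝ) y ^ 2 = #(pivotal A (Fin.cons 1 y)) := by
    rw [card_pivotal_cons_one, Real.sq_sqrt (Nat.cast_nonneg _)]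
    simp [Set.indicator_apply, D]
  rw [← sum_indicator]
  simpa only [meanSqrtPivotal, sq_sqrt_add_sq] using sq_sum_add_sq_sum_le univ
    (fun y _ => bernWeight_nonneg hε y) (fun y => √(#(pivotal (consSection A 1) y)))
    (D.indicator 1)

lemma half_variance_add_half_sq_le {a u d T : ℝ} (ha : a ∈ Set.Icc 0 1) (hd : |d| ≤ 1)
    (hu : 1 / 2 * (a * (1 - a)) ≤ u) (hT : 0 ≤ T) (h : u ^ 2 + d ^ 2 ≤ T ^ 2) :
    1 / 2 * (a * (1 - a)) + 1 / 2 * d ^ 2 ≤ T := by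
  set J := 1 / 2 * (a * (1 - a)) with hJ
  have hJ₀ : 0 ≤ J := mul_nonneg one_half_pos.le (mul_nonneg ha.1 (sub_nonneg.2 ha.2))
  have hJ₁ : J ≤ 1 / 8 := by linarith [sq_nonneg (a - 1 / 2)]
  have hd₁ : d ^ 2 ≤ 1 := (sq_le_one_iff_abs_le_one d).2 hd
  refine (sq_le_sq₀ (by positivity) hT).1 ?_
  calc (J + 1 / 2 * d ^ 2) ^ 2 = J ^ 2 + (J + 1 / 4 * d ^ 2) * d ^ 2 := by ring
    _ ≤ u ^ 2 + 1 * d ^ 2 := by gcongr; linarith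
    _ ≤ T ^ 2 := by linarith

theorem half_variance_le_meanSqrtPivotal (hε : ε ∈ Set.Icc 0 1) {A : Set (Pattern n)}
    (hA : IsIncreasing A) :
    1 / 2 * (prE (bernWeight ε) A * (1 - prE (bernWeight ε) A)) ≤ meanSqrtPivotal ε A := by
  induction n with
  | zero =>
    rcases A.eq_empty_or_nonempty with rfl | hne
    · simpa [prE] using meanSqrtPivotal_nonneg hε ∅
    · rw [Subsingleton.eq_univ_of_nonempty hne, prE_univ, sum_bernWeight]
      simpa using meanSqrtPivotal_nonneg hε _
  | succ n ih =>
    have prob_mem (B : Set (Pattern n)) : prE (bernWeight ε) B ∈ Set.Icc (0 : ℝ) 1 :=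
      ⟨prE_nonneg (bernWeight_nonneg hε) B, prE_bernWeight_le_one hε B⟩
    have section_zero := ih (isIncreasing_consSection hA 0)
    have section_one := half_variance_add_half_sq_le (prob_mem _)
      (abs_sub_le_of_nonneg_of_le (prob_mem _).1 (prob_mem _).2 (prob_mem _).1 (prob_mem _).2)
      (ih (isIncreasing_consSection hA 1))
      (Finset.sum_nonneg fun y _ => mul_nonneg (bernWeight_nonneg hε y) (Real.sqrt_nonneg _))
      (sq_meanSqrtPivotal_add_sq_le hA hε)
    rw [meanSqrtPivotal_succ, prE_bernWeight_succ]
    set a₀ := prE (bernWeight ε) (consSection A 0)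
    set a₁ := prE (bernWeight ε) (consSection A 1)
    -- Law of total variance for the indicator of `A`, conditioned on the first bit.
    calc 1 / 2 * (((1 - ε) * a₀ + ε * a₁) * (1 - ((1 - ε) * a₀ + ε * a₁)))
        = (1 - ε) * (1 / 2 * (a₀ * (1 - a₀))) +
            ε * (1 / 2 * (a₁ * (1 - a₁)) + (1 - ε) * (1 / 2 * (a₁ - a₀) ^ 2)) := by ring
      _ ≤ _ := by
        have hε₀ := hε.1
        have hε₁ : 0 ≤ 1 - ε := sub_nonneg.2 hε.2
        gcongr
        have drop_factor : (1 - ε) * (1 / 2 * (a₁ - a₀) ^ 2) ≤ 1 / 2 * (a₁ - a₀) ^ 2 :=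
          mul_le_of_le_one_left (by positivity) (sub_le_self 1 hε₀)
        exact (add_le_add le_rfl drop_factor).trans section_one

theorem half_variance_le_sqrt_mul_prE_pivotal (hε : ε ∈ Set.Icc 0 1) {A : Set (Pattern n)}
    (hA : IsIncreasing A) :
    1 / 2 * (prE (bernWeight ε) A * (1 - prE (bernWeight ε) A)) ≤
      √n * prE (bernWeight ε) {x | (pivotal A x).Nonempty} := by
  refine (half_variance_le_meanSqrtPivotal hε hA).trans ?_
  rw [prE_eq_sum_indicator, Finset.mul_sum]
  refine Finset.sum_le_sum fun x _ => ?_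
  rw [Set.indicator_apply]
  split_ifs with hx
  · have card_le : #(pivotal A x) ≤ n := card_finset_fin_le _
    rw [mul_comm]
    exact mul_le_mul_of_nonneg_right (Real.sqrt_le_sqrt (mod_cast card_le))
      (bernWeight_nonneg hε x)
  · simp [Finset.not_nonempty_iff_eq_empty.1 hx]

end Isoperimetry

section Entropy

variable {Ω B : Type*} [Fintype Ω] [Fintype B] {p : Ω → ℝ}

lemma condEnt_eq_sum {A : Type*} [Fintype A] (p : Ω → ℝ) (f : Ω → A) (g : Ω → B) :
    condEnt p f g = ∑ ω, p ω * -Real.logb 2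
      (prE p {ω' | f ω' = f ω ∧ g ω' = g ω} / prE p {ω' | g ω' = g ω}) := by
  have := sum_prE_fiber_mul p (fun ω => (f ω, g ω)) fun c => -Real.logb 2
    (prE p {ω' | f ω' = c.1 ∧ g ω' = c.2} / prE p {ω' | g ω' = c.2})
  rw [← this, Fintype.sum_prod_type]
  simp only [condEnt, Prod.mk.injEq, mul_neg, Finset.sum_neg_distrib]

lemma entr_eq_condEnt_const {A : Type*} [Fintype A] (hp : ∑ ω, p ω = 1) (f : Ω → A) :
    entr p f = condEnt p f fun _ => () := by
  simp [entr, condEnt, prE, hp]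

lemma prE_and_eq_half_of_flip (f : Ω → ZMod 2) {E : Set Ω} (σ : Equiv.Perm Ω)
    (hσ : ∀ ω, p (σ ω) = p ω) (hE : ∀ ω, σ ω ∈ E ↔ ω ∈ E) (hf : ∀ ω, f (σ ω) = f ω + 1)
    (a : ZMod 2) : prE p {ω | f ω = a ∧ ω ∈ E} = prE p E / 2 := by
  set F := {ω | f ω = a ∧ ω ∈ E}
  have add_one_eq_iff (u : ZMod 2) : u + 1 = a ↔ u ≠ a := by
    rw [← sub_ne_zero, zmod_two_ne_zero_iff, sub_eq_iff_eq_add', CharTwo.add_eq_iff_eq_add]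
  have flip_eq_sdiff : σ ⁻¹' F = E \ F := by
    ext ω
    simp only [F, Set.mem_preimage, Set.mem_ofPred_eq, Set.mem_sdiff, hE, hf, add_one_eq_iff]
    tauto
  have half := prE_sdiff p (show F ⊆ E from fun _ h => h.2)
  rw [← flip_eq_sdiff, prE_preimage_equiv σ hσ] at half
  linarith

lemma condEnt_eq_prE_of_balanced (hp : 0 ≤ p) {f : Ω → ZMod 2} {g : Ω → B} (U : Set Ω)
    (hdet : ∀ ω ∉ U, ∀ ω', g ω' = g ω → f ω' = f ω)
    (hbal : ∀ ω ∈ U, prE p {ω' | f ω' = f ω ∧ g ω' = g ω} = prE p {ω' | g ω' = g ω} / 2) :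
    condEnt p f g = prE p U := by
  rw [condEnt_eq_sum, prE_eq_sum_indicator]
  refine Finset.sum_congr rfl fun ω _ => ?_
  rcases (hp ω).eq_or_lt with hω | hω
  · rw [Set.indicator_apply, ← hω, Pi.zero_apply, zero_mul, ite_self]
  have fiber_pos : 0 < prE p {ω' | g ω' = g ω} :=
    hω.trans_le (Finset.single_le_sum (fun ω' _ => hp ω') (by simp))
  by_cases hU : ω ∈ U
  · rw [hbal ω hU, Set.indicator_of_mem hU, div_right_comm, div_self fiber_pos.ne', one_div,
      Real.logb_inv, Real.logb_self_eq_one one_lt_two, neg_neg, mul_one]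
  · have fiber_eq : {ω' | f ω' = f ω ∧ g ω' = g ω} = {ω' | g ω' = g ω} :=
      Set.ext fun ω' => and_iff_right_of_imp (hdet ω hU ω')
    rw [fiber_eq, div_self fiber_pos.ne', Set.indicator_of_notMem hU, Real.logb_one, neg_zero,
      mul_zero]

end Entropy

section ErasureChannel

variable {n : ℕ} {C : Submodule (ZMod 2) (Pattern n)} {ε : ℝ}

lemma prod_bitWeight (ε : ℝ) (S : Finset (Fin n)) (z : Pattern n) :
    ∏ l ∈ S, bitWeight ε (z l) =
      ε ^ #(S.filter fun l => z l = 1) * (1 - ε) ^ #(S.filter fun l => z l = 0) := by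
  simp only [bitWeight, Finset.prod_ite, Finset.prod_const, ← zmod_two_ne_zero_iff, not_not]

lemma pmfP_eq (C : Submodule (ZMod 2) (Pattern n)) (ε : ℝ) (ω : Samp n C) :
    pmfP C ε ω = (Nat.card C : ℝ)⁻¹ * bernWeight ε ω.2 := by
  have card_zeros : #{l | ω.2 l = 0} = n - wH ω.2 := by
    have := Finset.card_filter_add_card_filter_not (s := univ) fun l => ω.2 l = 0
    rw [Finset.card_univ, Fintype.card_fin] at this
    exact Nat.eq_sub_of_add_eq this
  rw [pmfP, bernWeight, prod_bitWeight, card_zeros, mul_assoc]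
  simp only [← zmod_two_ne_zero_iff]
  rfl

lemma pmfP_nonneg (C : Submodule (ZMod 2) (Pattern n)) (hε : ε ∈ Set.Icc 0 1) :
    0 ≤ pmfP C ε := fun ω => by
  rw [pmfP_eq]
  exact mul_nonneg (by positivity) (bernWeight_nonneg hε _)

lemma prE_pmfP_preimage_snd (C : Submodule (ZMod 2) (Pattern n)) (ε : ℝ) (E : Set (Pattern n)) :
    prE (pmfP C ε) (Prod.snd ⁻¹' E) = prE (bernWeight ε) E := by
  have card_ne_zero : (Nat.card C : ℝ) ≠ 0 := mod_cast Nat.card_pos.ne'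
  simp only [prE_eq_sum_indicator, Set.indicator_apply, Set.mem_preimage, pmfP_eq,
    Fintype.sum_prod_type, Finset.sum_const, Finset.card_univ, ← Nat.card_eq_fintype_card,
    nsmul_eq_mul, Finset.mul_sum, mul_ite, mul_zero, mul_inv_cancel_left₀ card_ne_zero]

lemma sum_pmfP (C : Submodule (ZMod 2) (Pattern n)) (ε : ℝ) : ∑ ω, pmfP C ε ω = 1 := by
  rw [← prE_univ, ← Set.preimage_univ (f := Prod.snd), prE_pmfP_preimage_snd, prE_univ,
    sum_bernWeight]

/-- The erasure patterns for which coordinate `i` of the codeword is not determined by the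
coordinates in `V e`: linearity makes this the existence of a codeword vanishing on `V e`
but not at `i`. -/
def ambiguous (C : Submodule (ZMod 2) (Pattern n)) (V : Pattern n → Set (Fin n)) (i : Fin n) :
    Set (Pattern n) :=
  {e | ∃ c ∈ C, c i = 1 ∧ ∀ l ∈ V e, c l = 0}

theorem condEnt_coord_eq_prE_ambiguous (hε : ε ∈ Set.Icc 0 1) {B : Type*} [Fintype B]
    {g : Samp n C → B} {V : Pattern n → Set (Fin n)}
    (hg : ∀ ω ω', g ω' = g ω ↔ V ω'.2 = V ω.2 ∧ ∀ l ∈ V ω.2, ω'.1.1 l = ω.1.1 l) (i : Fin n) :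
    condEnt (pmfP C ε) (fun ω => ω.1.1 i) g = prE (bernWeight ε) (ambiguous C V i) := by
  rw [← prE_pmfP_preimage_snd C]
  refine condEnt_eq_prE_of_balanced (pmfP_nonneg C hε) _ (fun ω hω ω' hgω => ?_) ?_
  · by_contra hne
    refine hω ⟨ω'.1 - ω.1, (ω'.1 - ω.1).2, zmod_two_ne_zero_iff.1 (sub_ne_zero.2 hne), ?_⟩
    exact fun l hl => sub_eq_zero.2 (((hg ω ω').1 hgω).2 l hl)
  · rintro ω ⟨c, hc, hci, hcV⟩
    -- Translating the codeword by `c` preserves the observation and flips coordinate `i`.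
    let translate : Equiv.Perm (Samp n C) := (Equiv.addRight ⟨c, hc⟩).prodCongr (Equiv.refl _)
    refine prE_and_eq_half_of_flip _ translate (fun ω' => ?_) (fun ω' => ?_) (fun ω' => ?_) _
    · simp [translate, pmfP_eq]
    · simp only [hg]
      refine and_congr_right fun _ => forall₂_congr fun l hl => ?_
      simp [translate, hcV l hl]
    · simp [translate, hci]

/-- The coordinates satisfying `q` that are received under the erasure pattern `e`. -/
def received (q : Fin n → Prop) (e : Pattern n) : Set (Fin n) := {l | q l ∧ e l ≠ 1}

lemma Yout_apply_eq_iff {ω ω' : Samp n C} {l : Fin n} :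
    Yout ω' l = Yout ω l ↔ (ω'.2 l ≠ 1 ↔ ω.2 l ≠ 1) ∧ (ω.2 l ≠ 1 → ω'.1.1 l = ω.1.1 l) := by
  unfold Yout
  by_cases h : ω.2 l = 1 <;> by_cases h' : ω'.2 l = 1 <;> simp [h, h']

lemma restrict_Yout_eq_iff (q : Fin n → Prop) (ω ω' : Samp n C) :
    (fun l : {l // q l} => Yout ω' l) = (fun l : {l // q l} => Yout ω l) ↔
      received q ω'.2 = received q ω.2 ∧ ∀ l ∈ received q ω.2, ω'.1.1 l = ω.1.1 l := by
  simp only [funext_iff, Subtype.forall, Yout_apply_eq_iff, received, Set.ext_iff,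
    Set.mem_ofPred_eq, and_congr_right_iff, and_imp, ← forall_and]

theorem condEnt_coord_Ynot (C : Submodule (ZMod 2) (Pattern n)) (hε : ε ∈ Set.Icc 0 1)
    (i : Fin n) :
    condEnt (pmfP C ε) (fun ω => ω.1.1 i) (Ynot i) =
      prE (bernWeight ε) (ambiguous C (received (· ≠ i)) i) :=
  condEnt_coord_eq_prE_ambiguous hε (restrict_Yout_eq_iff _) i

theorem condEnt_coord_Ynot2 (C : Submodule (ZMod 2) (Pattern n)) (hε : ε ∈ Set.Icc 0 1)
    (i j : Fin n) :
    condEnt (pmfP C ε) (fun ω => ω.1.1 i) (Ynot2 i j) =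
      prE (bernWeight ε) (ambiguous C (received fun l => l ≠ i ∧ l ≠ j) i) :=
  condEnt_coord_eq_prE_ambiguous hε (restrict_Yout_eq_iff _) i

lemma insert_eq_insert_iff_of_notMem {α : Type*} {s t : Set α} {a : α} (hs : a ∉ s)
    (ht : a ∉ t) : insert a s = insert a t ↔ s = t := by
  refine ⟨fun h => ?_, congrArg (insert a)⟩
  rw [← Set.insert_sdiff_self_of_notMem hs, h, Set.insert_sdiff_self_of_notMem ht]

theorem condEnt_coord_pair_Ynot2 (C : Submodule (ZMod 2) (Pattern n)) (hε : ε ∈ Set.Icc 0 1)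
    (i j : Fin n) :
    condEnt (pmfP C ε) (fun ω => ω.1.1 i) (fun ω => (ω.1.1 j, Ynot2 i j ω)) =
      prE (bernWeight ε)
        (ambiguous C (fun e => insert j (received (fun l => l ≠ i ∧ l ≠ j) e)) i) := by
  refine condEnt_coord_eq_prE_ambiguous hε (fun ω ω' => ?_) i
  have notMem_received (e : Pattern n) : j ∉ received (fun l => l ≠ i ∧ l ≠ j) e :=
    fun h => h.1.2 rfl
  rw [Prod.mk.injEq, insert_eq_insert_iff_of_notMem (notMem_received _) (notMem_received _),
    Set.forall_mem_insert, and_left_comm]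
  exact and_congr_right fun _ => restrict_Yout_eq_iff _ ω ω'

theorem entr_coord (C : Submodule (ZMod 2) (Pattern n)) (hε : ε ∈ Set.Icc 0 1) (i : Fin n) :
    entr (pmfP C ε) (fun ω => ω.1.1 i) = prE (bernWeight ε) (ambiguous C (fun _ => ∅) i) := by
  rw [entr_eq_condEnt_const (sum_pmfP C ε)]
  exact condEnt_coord_eq_prE_ambiguous hε (fun _ _ => by simp) i

lemma condEnt_coord_Ynot_mem_Ioo {δ : ℝ} (hδ : 0 ≤ δ) (hε : ε ∈ Set.Icc 0 1) {i : Fin n}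
    (hI : mutInf (pmfP C ε) (fun ω => ω.1.1 i) (Ynot i) ∈ Set.Ioo δ (1 - δ)) :
    condEnt (pmfP C ε) (fun ω => ω.1.1 i) (Ynot i) ∈ Set.Ioo δ (1 - δ) := by
  have condEnt_nonneg : 0 ≤ condEnt (pmfP C ε) (fun ω => ω.1.1 i) (Ynot i) := by
    rw [condEnt_coord_Ynot C hε]
    exact prE_nonneg (bernWeight_nonneg hε) _
  rw [mutInf, entr_coord C hε] at hI
  by_cases hi : ∃ c ∈ C, c i = 1
  · have : ambiguous C (fun _ => ∅) i = Set.univ := by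
      simpa [ambiguous, Set.eq_univ_iff_forall] using hi
    rw [this, prE_univ, sum_bernWeight] at hI
    exact ⟨by linarith [hI.2], by linarith [hI.1]⟩
  · have : ambiguous C (fun _ => ∅) i = ∅ := by
      simpa [ambiguous, Set.eq_empty_iff_forall_notMem] using hi
    have entr_zero : prE (bernWeight ε) (∅ : Set (Pattern n)) = 0 := by simp [prE]
    rw [this, entr_zero] at hI
    linarith [hI.1]

end ErasureChannel

section CoveredCodewords

variable {n : ℕ} {C : Submodule (ZMod 2) (Pattern n)} {ε : ℝ} {i j : Fin n}

/-- The pattern `e` with coordinates `i` and `j` set to `1` (erased). It turns an i.i.d. pattern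
into the random pattern `Z^ε(ij)`. -/
def eraseAt (i j : Fin n) (e : Pattern n) : Pattern n :=
  fun l => if l = i ∨ l = j then 1 else e l

lemma eraseAt_eq_iff {e z : Pattern n} (hi : z i = 1) (hj : z j = 1) :
    eraseAt i j e = z ↔ ∀ l ∈ univ.filter fun l => l ≠ i ∧ l ≠ j, e l = z l := by
  simp only [funext_iff, eraseAt, Finset.mem_filter, Finset.mem_univ, true_and, ← not_or]
  refine forall_congr' fun l => ?_
  split_ifs with hl
  · rcases hl with rfl | rfl <;> simp [hi, hj]
  · simp [hl]

lemma probZ_eq_prE (ε : ℝ) (i j : Fin n) (A : Set (Pattern n)) :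
    probZ ε i j A = prE (bernWeight ε) (eraseAt i j ⁻¹' A) := by
  have fiber_weight (z : Pattern n) (hz : z ∈ A ∧ z i = 1 ∧ z j = 1) :
      ε ^ #{k | k ≠ i ∧ k ≠ j ∧ z k = 1} * (1 - ε) ^ #{k | k ≠ i ∧ k ≠ j ∧ z k = 0} =
        prE (bernWeight ε) {e | eraseAt i j e = z} := by
    simp only [eraseAt_eq_iff hz.2.1 hz.2.2, prE_bernWeight_cylinder, prod_bitWeight,
      Finset.filter_filter, and_assoc]
  calc probZ ε i j A
      = ∑ z with z ∈ A ∧ z i = 1 ∧ z j = 1, prE (bernWeight ε) {e | eraseAt i j e = z} :=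
        Finset.sum_congr rfl fun z hz => fiber_weight z (Finset.mem_filter.1 hz).2
    _ = ∑ z, prE (bernWeight ε) {e | eraseAt i j e = z} * A.indicator 1 z := by
        rw [Finset.sum_filter]
        refine Finset.sum_congr rfl fun z _ => ?_
        split_ifs with hz
        · simp [hz.1]
        · by_cases hzA : z ∈ A
          · have fiber_empty : {e | eraseAt i j e = z} = ∅ := by
              refine Set.eq_empty_iff_forall_notMem.2 fun e he => hz ⟨hzA, ?_⟩
              simp [← Set.mem_ofPred.1 he, eraseAt]
            simp [fiber_empty, prE]
          · simp [hzA]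
    _ = prE (bernWeight ε) (eraseAt i j ⁻¹' A) := by
        rw [sum_prE_fiber_mul, prE_eq_sum_indicator]
        simp [Set.indicator_apply]

lemma probZ_nonneg (hε : ε ∈ Set.Icc 0 1) (i j : Fin n) (A : Set (Pattern n)) :
    0 ≤ probZ ε i j A := by
  rw [probZ_eq_prE]
  exact prE_nonneg (bernWeight_nonneg hε) _

lemma covers_eraseAt {x z : Pattern n} (h : covers z x) (i j : Fin n) :
    covers (eraseAt i j z) (eraseAt i j x) := by
  intro l
  unfold eraseAt
  split_ifs
  exacts [id, h l]

lemma mem_Cab_eraseAt {a b : ZMod 2} {e c : Pattern n} :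
    c ∈ Cab C i j a b (eraseAt i j e) ↔
      c ∈ C ∧ c i = a ∧ c j = b ∧ ∀ l ∈ received (fun l => l ≠ i ∧ l ≠ j) e, c l = 0 := by
  have covers_iff : covers (eraseAt i j e) c ↔
      ∀ l ∈ received (fun l => l ≠ i ∧ l ≠ j) e, c l = 0 := by
    refine forall_congr' fun l => ?_
    rw [← not_imp_not, not_not, not_not]
    simp only [received, eraseAt, Set.mem_ofPred_eq, ← not_or, ← zmod_two_ne_zero_iff]
    split_ifs with hl <;> simp [hl]
  simp only [Cab, Set.mem_ofPred_eq, covers_iff]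

lemma Cab_subset_of_covers {a b : ZMod 2} {x z : Pattern n} (h : covers z x) :
    Cab C i j a b x ⊆ Cab C i j a b z :=
  fun _ ⟨hc, hi, hj, hx⟩ => ⟨hc, hi, hj, fun l hl => h l (hx l hl)⟩

lemma add_mem_Cab {a b a' b' : ZMod 2} {z c c' : Pattern n} (h : c ∈ Cab C i j a b z)
    (h' : c' ∈ Cab C i j a' b' z) : c + c' ∈ Cab C i j (a + a') (b + b') z := by
  obtain ⟨hc, rfl, rfl, hz⟩ := h
  obtain ⟨hc', rfl, rfl, hz'⟩ := h'
  refine ⟨C.add_mem hc hc', rfl, rfl, fun l hl => ?_⟩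
  by_cases hl' : c l = 0
  · exact hz' l fun h => hl (by rw [Pi.add_apply, hl', h, add_zero])
  · exact hz l hl'

lemma Cab_add_nonempty {a b a' b' : ZMod 2} {z : Pattern n} (h : (Cab C i j a b z).Nonempty)
    (h' : (Cab C i j a' b' z).Nonempty) : (Cab C i j (a + a') (b + b') z).Nonempty :=
  ⟨_, add_mem_Cab h.some_mem h'.some_mem⟩

lemma mem_Cab_eraseAt_update_zero {a b : ZMod 2} {x c : Pattern n} {k : Fin n} (hk : c k = 0)
    (h : c ∈ Cab C i j a b (eraseAt i j x)) :
    c ∈ Cab C i j a b (eraseAt i j (Function.update x k 0)) := by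
  refine ⟨h.1, h.2.1, h.2.2.1, fun l hl => ?_⟩
  have hlk : l ≠ k := fun hlk => hl (hlk ▸ hk)
  simpa only [eraseAt, Function.update_of_ne hlk] using h.2.2.2 l hl

lemma Cab_one_zero_nonempty_of {z : Pattern n} (h : (Cab C i j 0 1 z).Nonempty)
    (h' : (Cab C i j 1 1 z).Nonempty) : (Cab C i j 1 0 z).Nonempty := by
  simpa [CharTwo.add_self_eq_zero] using Cab_add_nonempty h h'

lemma mem_B4_iff {z : Pattern n} :
    z ∈ B4 C i j ↔ (Cab C i j 1 1 z).Nonempty ∧ ¬(Cab C i j 1 0 z).Nonempty := by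
  simp only [B4, Set.mem_ofPred_eq, ← Set.nonempty_iff_ne_empty,
    ← Set.not_nonempty_iff_eq_empty]
  exact ⟨fun h => ⟨h.1, h.2.2⟩,
    fun h => ⟨h.1, fun h01 => h.2 (Cab_one_zero_nonempty_of h01 h.1), h.2⟩⟩

lemma compl_B1_subset (C : Submodule (ZMod 2) (Pattern n)) (i j : Fin n) :
    (B1 C i j)ᶜ ⊆ (B2 C i j ∪ B3 C i j ∪ B4 C i j) ∪ B5 C i j := by
  intro z
  have closed₁₁ : (Cab C i j 0 1 z).Nonempty → (Cab C i j 1 0 z).Nonempty →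
      (Cab C i j 1 1 z).Nonempty := fun h h' => by simpa using Cab_add_nonempty h h'
  have closed₁₀ : (Cab C i j 0 1 z).Nonempty → (Cab C i j 1 1 z).Nonempty →
      (Cab C i j 1 0 z).Nonempty := Cab_one_zero_nonempty_of
  have closed₀₁ : (Cab C i j 1 0 z).Nonempty → (Cab C i j 1 1 z).Nonempty →
      (Cab C i j 0 1 z).Nonempty := fun h h' => by
    simpa [CharTwo.add_self_eq_zero] using Cab_add_nonempty h h'
  simp only [B1, B2, B3, B4, B5, Set.mem_compl_iff, Set.mem_union, Set.mem_ofPred_eq,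
    ← Set.nonempty_iff_ne_empty, ← Set.not_nonempty_iff_eq_empty]
  tauto

lemma ambiguous_eq_preimage_Cab_nonempty (C : Submodule (ZMod 2) (Pattern n)) (i j : Fin n) :
    ambiguous C (fun e => insert j (received (fun l => l ≠ i ∧ l ≠ j) e)) i =
      {e | (Cab C i j 1 0 (eraseAt i j e)).Nonempty} := by
  ext e
  refine exists_congr fun c => ?_
  rw [mem_Cab_eraseAt, Set.forall_mem_insert]

lemma ambiguous_eq_preimage_Cab_nonempty_or (C : Submodule (ZMod 2) (Pattern n)) (i j : Fin n) :
    ambiguous C (received fun l => l ≠ i ∧ l ≠ j) i =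
      {e | (Cab C i j 1 0 (eraseAt i j e)).Nonempty ∨
        (Cab C i j 1 1 (eraseAt i j e)).Nonempty} := by
  ext e
  simp only [ambiguous, Set.mem_ofPred_eq, Set.Nonempty, mem_Cab_eraseAt, ← exists_or]
  refine exists_congr fun c => ?_
  have := em (c j = 0)
  rw [← ne_eq, zmod_two_ne_zero_iff] at this
  tauto

theorem condMI_eq_probZ_B4 (C : Submodule (ZMod 2) (Pattern n)) (hε : ε ∈ Set.Icc 0 1)
    (i j : Fin n) :
    condMI (pmfP C ε) (fun ω => ω.1.1 i) (fun ω => ω.1.1 j) (Ynot2 i j) =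
      probZ ε i j (B4 C i j) := by
  rw [condMI, condEnt_coord_Ynot2 C hε, condEnt_coord_pair_Ynot2 C hε,
    ambiguous_eq_preimage_Cab_nonempty, ambiguous_eq_preimage_Cab_nonempty_or, probZ_eq_prE,
    ← prE_sdiff _ (Set.ofPred_subset_ofPred.2 fun _ => Or.inl)]
  congr 1
  ext e
  simp only [Set.mem_sdiff, Set.mem_ofPred_eq, Set.mem_preimage, mem_B4_iff]
  tauto

lemma probZ_B5_le_condEnt (C : Submodule (ZMod 2) (Pattern n)) (hε : ε ∈ Set.Icc 0 1)
    (i j : Fin n) :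
    probZ ε i j (B5 C i j) ≤ condEnt (pmfP C ε) (fun ω => ω.1.1 i) (Ynot i) := by
  rw [probZ_eq_prE, condEnt_coord_Ynot C hε]
  refine prE_mono (bernWeight_nonneg hε) fun e he => ?_
  obtain ⟨c, hc⟩ := Set.nonempty_iff_ne_empty.2 he.2.1
  obtain ⟨hcC, hci, hcj, hc0⟩ := mem_Cab_eraseAt.1 hc
  refine ⟨c, hcC, hci, fun l hl => ?_⟩
  by_cases hlj : l = j
  · rw [hlj, hcj]
  · exact hc0 l ⟨⟨hl.1, hlj⟩, hl.2⟩

lemma condEnt_le_probZ_compl_B1 (C : Submodule (ZMod 2) (Pattern n)) (hε : ε ∈ Set.Icc 0 1)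
    (i j : Fin n) :
    condEnt (pmfP C ε) (fun ω => ω.1.1 i) (Ynot i) ≤ probZ ε i j (B1 C i j)ᶜ := by
  rw [probZ_eq_prE, condEnt_coord_Ynot C hε]
  refine prE_mono (bernWeight_nonneg hε) fun e ⟨c, hcC, hci, hc0⟩ hB1 => ?_
  have mem_Cab : c ∈ Cab C i j 1 (c j) (eraseAt i j e) :=
    mem_Cab_eraseAt.2 ⟨hcC, hci, rfl, fun l hl => hc0 l ⟨hl.1.1, hl.2⟩⟩
  by_cases hcj : c j = 0
  · exact hB1.2.1.le (hcj ▸ mem_Cab)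
  · exact hB1.2.2.le (zmod_two_ne_zero_iff.1 hcj ▸ mem_Cab)

lemma isIncreasing_preimage_compl_B1 (C : Submodule (ZMod 2) (Pattern n)) (i j : Fin n) :
    IsIncreasing (eraseAt i j ⁻¹' (B1 C i j)ᶜ) := by
  intro x z hzx hx hz
  have empty_of_empty {a b : ZMod 2} (h : Cab C i j a b (eraseAt i j z) = ∅) :
      Cab C i j a b (eraseAt i j x) = ∅ :=
    Set.subset_eq_empty (Cab_subset_of_covers (covers_eraseAt hzx i j)) h
  exact hx ⟨empty_of_empty hz.1, empty_of_empty hz.2.1, empty_of_empty hz.2.2⟩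

lemma pivotal_eq_empty_of_mem_B5 {x : Pattern n} (hx : eraseAt i j x ∈ B5 C i j) :
    pivotal (eraseAt i j ⁻¹' (B1 C i j)ᶜ) x = ∅ := by
  refine Finset.eq_empty_of_forall_notMem fun k hk => ?_
  have hB1 : eraseAt i j (Function.update x k 0) ∈ B1 C i j :=
    not_not.1 (Finset.mem_filter.1 hk).2.2
  obtain ⟨c, hc⟩ := Set.nonempty_iff_ne_empty.2 hx.1
  obtain ⟨c', hc'⟩ := Set.nonempty_iff_ne_empty.2 hx.2.1
  have hck : c k ≠ 0 := fun h => hB1.1.le (mem_Cab_eraseAt_update_zero h hc)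
  have hck' : c' k ≠ 0 := fun h => hB1.2.1.le (mem_Cab_eraseAt_update_zero h hc')
  have sum_vanishes : (c + c') k = 0 := by
    rw [Pi.add_apply, zmod_two_ne_zero_iff.1 hck, zmod_two_ne_zero_iff.1 hck',
      CharTwo.add_self_eq_zero]
  have sum_mem : c + c' ∈ Cab C i j 1 1 (eraseAt i j x) := by simpa using add_mem_Cab hc hc'
  exact hB1.2.2.le (mem_Cab_eraseAt_update_zero sum_vanishes sum_mem)

lemma pivotal_nonempty_subset (C : Submodule (ZMod 2) (Pattern n)) (i j : Fin n) :
    {x | (pivotal (eraseAt i j ⁻¹' (B1 C i j)ᶜ) x).Nonempty} ⊆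
      eraseAt i j ⁻¹' (B2 C i j ∪ B3 C i j ∪ B4 C i j) := by
  rintro x ⟨k, hk⟩
  refine (compl_B1_subset C i j (Finset.mem_filter.1 hk).2.1).resolve_right fun hB5 => ?_
  exact Finset.notMem_empty k (pivotal_eq_empty_of_mem_B5 hB5 ▸ hk)

theorem sq_div_three_le_sqrt_mul_probZ {δ : ℝ} (hδ : 0 ≤ δ) (hε : ε ∈ Set.Icc 0 1)
    (hI : mutInf (pmfP C ε) (fun ω => ω.1.1 i) (Ynot i) ∈ Set.Ioo δ (1 - δ)) (j : Fin n) :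
    δ ^ 2 / 3 ≤ √n * probZ ε i j (B2 C i j ∪ B3 C i j ∪ B4 C i j) := by
  set M := probZ ε i j (B2 C i j ∪ B3 C i j ∪ B4 C i j) with hM
  set a := probZ ε i j (B1 C i j)ᶜ with ha
  have isoperimetry : 1 / 2 * (a * (1 - a)) ≤ √n * M := by
    rw [hM, ha, probZ_eq_prE, probZ_eq_prE]
    refine (half_variance_le_sqrt_mul_prE_pivotal hε
      (isIncreasing_preimage_compl_B1 C i j)).trans ?_
    gcongr
    exact prE_mono (bernWeight_nonneg hε) (pivotal_nonempty_subset C i j)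
  have a_le : a ≤ M + probZ ε i j (B5 C i j) := by
    simp only [hM, ha, probZ_eq_prE]
    exact (prE_mono (bernWeight_nonneg hε) (Set.preimage_mono (compl_B1_subset C i j))).trans
      (prE_union_le (bernWeight_nonneg hε) _ _)
  obtain ⟨δ_lt, lt_one_sub_δ⟩ := condEnt_coord_Ynot_mem_Ioo hδ hε hI
  have B5_le := probZ_B5_le_condEnt C hε i j
  have le_a := condEnt_le_probZ_compl_B1 C hε i j
  have a_le_one : a ≤ 1 := by
    rw [ha, probZ_eq_prE]
    exact prE_bernWeight_le_one hε _
  have variance_ge : δ * (δ - M) ≤ a * (1 - a) :=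
    calc δ * (δ - M) ≤ δ * (1 - a) := mul_le_mul_of_nonneg_left (by linarith) hδ
      _ ≤ a * (1 - a) := mul_le_mul_of_nonneg_right (by linarith) (by linarith)
  have δ_mul_M_le : δ * M ≤ √n * M := by
    have one_le_sqrt : 1 ≤ √n := Real.one_le_sqrt.2 (mod_cast i.pos)
    have M_nonneg : 0 ≤ M := probZ_nonneg hε i j _
    gcongr
    linarith
  linarith

theorem mul_alphaIJ_le_condMI {δ : ℝ} (hδ : 0 < δ) (hε : ε ∈ Set.Icc 0 1)
    (hI : mutInf (pmfP C ε) (fun ω => ω.1.1 i) (Ynot i) ∈ Set.Ioo δ (1 - δ)) (j : Fin n) :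
    δ ^ 2 / 3 / √n * alphaIJ C ε i j ≤
      condMI (pmfP C ε) (fun ω => ω.1.1 i) (fun ω => ω.1.1 j) (Ynot2 i j) := by
  set M := probZ ε i j (B2 C i j ∪ B3 C i j ∪ B4 C i j)
  have sqrt_pos : 0 < √n := Real.sqrt_pos.2 (mod_cast i.pos)
  have le_M : δ ^ 2 / 3 / √n ≤ M := by
    rw [div_le_iff₀' sqrt_pos]
    exact sq_div_three_le_sqrt_mul_probZ hδ.le hε hI j
  have M_pos : 0 < M := lt_of_lt_of_le (by positivity) le_M
  calc δ ^ 2 / 3 / √n * alphaIJ C ε i j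
      ≤ M * alphaIJ C ε i j := by
        gcongr
        exact div_nonneg (probZ_nonneg hε i j _) M_pos.le
    _ = probZ ε i j (B4 C i j) := mul_div_cancel₀ _ M_pos.ne'
    _ = _ := (condMI_eq_probZ_B4 C hε i j).symm

end CoveredCodewords

theorem condMI_blowing_up_bound :
    ∃ c : ℝ → ℝ → ℝ,
      (∀ δ ε : ℝ, δ ∈ Set.Ioo (0 : ℝ) (1 / 2) → ε ∈ Set.Ioo (0 : ℝ) 1 → 0 < c δ ε) ∧
      (∀ δ₀ ε₀ ε₁ : ℝ, 0 < δ₀ → 0 < ε₀ → ε₁ < 1 →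
        ∃ m : ℝ, 0 < m ∧
          ∀ δ ε : ℝ, δ₀ ≤ δ → δ < 1 / 2 → ε₀ ≤ ε → ε ≤ ε₁ → m ≤ c δ ε) ∧
      ∀ (n : ℕ) (C : Submodule (ZMod 2) (Pattern n)) (i j : Fin n), i ≠ j →
        ∀ δ ε : ℝ, δ ∈ Set.Ioo (0 : ℝ) (1 / 2) → ε ∈ Set.Ioo (0 : ℝ) 1 →
          mutInf (pmfP C ε) (fun ω => ω.1.1 i) (Ynot i) ∈ Set.Ioo δ (1 - δ) →
          condMI (pmfP C ε) (fun ω => ω.1.1 i) (fun ω => ω.1.1 j) (Ynot2 i j) ≥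
            c δ ε / Real.sqrt n * alphaIJ C ε i j := by
  refine ⟨fun δ _ => δ ^ 2 / 3, fun δ _ hδ _ => ?_, fun δ₀ _ _ hδ₀ _ _ => ?_,
    fun n C i j _ δ ε hδ hε hI => ?_⟩
  · have := hδ.1
    positivity
  · exact ⟨δ₀ ^ 2 / 3, by positivity, fun δ _ hδ _ _ _ => by beta_reduce; gcongr⟩
  · exact mul_alphaIJ_le_condMI hδ.1 (Set.Ioo_subset_Icc_self hε) hI j

end
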